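/- Quadratic functions bounded from below (Lemma 4.1, first part): Let H be a Hilbert space over 𝕜 (𝕜 = ℝ or ℂ), P a bounded self-adjoint operator on H, w ∈ H, and define V_{P,w} : H → ℝ by V_{P,w}(x) := ⟨Px,x⟩ + 2Re⟨w,x⟩. Then V_{P,w} is bounded from below if and only if P is non-negative (⟨Px,x⟩ ≥ 0 for all x ∈ H) and w ∈ ran P^{1/2}. -/

import Mathlib

open scoped InnerProductSpace
open RCLike ContinuousLinearMap

/-- `w` lies in the range of `P^{1/2}`, the (unique) non-negative self-adjoint square
root of the non-negative self-adjoint operator `P`, expressed via the existence of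
such a square root. -/
def MemRanSqrt {𝕜 H : Type*} [RCLike 𝕜]
    [NormedAddCommGroup H] [InnerProductSpace 𝕜 H] [CompleteSpace H]
    (P : H →L[𝕜] H) (w : H) : Prop :=
  ∃ R : H →L[𝕜] H, IsSelfAdjoint R ∧ (∀ x : H, 0 ≤ re ⟪R x, x⟫_𝕜) ∧
    R.comp R = P ∧ w ∈ Set.range R

/-!
Along each line, boundedness from below is a discriminant inequality,
`‖⟪w, x⟫‖ ^ 2 ≤ -c * re ⟪P x, x⟫` for every lower bound `c`. A negative `c` forces `P ≥ 0`; writing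
`P = R ^ 2` with `R ≥ 0`, it also says that `R x ↦ ⟪w, x⟫` is a bounded functional on `ran R`.
Extending it to the whole space and representing it by a vector `v` gives `w = R v`. Conversely, for
`w = R v` the quadratic function equals `‖R x + v‖ ^ 2 - ‖v‖ ^ 2`.

Over `ℝ` and `ℂ` alike, the square root of `P` with `‖P‖ ≤ 1` is `1 - 2 * z`, where `z` is the fixed
point of `z ↦ z * z + b` for `b = (1 - P) / 4`. The iterates from `0` converge because their
increments are dominated by those of the real iteration at `‖b‖ ≤ 1 / 4`, which is increasing and
bounded by `1 / 2`.
-/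

section CriticalOrbit

/-- The orbit of the critical point `0` under the quadratic map `z ↦ z * z + b`. Its limit `z`, when
it exists, makes `1 - 2 * z` a square root of `1 - 4 * b`. This normalization avoids the scalar
`1 / 2` of the usual iteration for `√(1 - a)`, so that `A` need not be an algebra. -/
def criticalOrbit {A : Type*} [NonUnitalNonAssocSemiring A] (b : A) : ℕ → A
  | 0 => 0
  | n + 1 => criticalOrbit b n * criticalOrbit b n + b

lemma criticalOrbit_succ_succ_sub {A : Type*} [NonUnitalNonAssocRing A] (b : A) (n : ℕ) :
    criticalOrbit b (n + 2) - criticalOrbit b (n + 1) =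
      criticalOrbit b (n + 1) * (criticalOrbit b (n + 1) - criticalOrbit b n) +
        (criticalOrbit b (n + 1) - criticalOrbit b n) * criticalOrbit b n := by
  rw [mul_sub, sub_mul, sub_add_sub_cancel]
  exact add_sub_add_right_eq_sub _ _ b

lemma isSelfAdjoint_criticalOrbit {A : Type*} [NonUnitalSemiring A] [StarRing A] {b : A}
    (hb : IsSelfAdjoint b) : ∀ n, IsSelfAdjoint (criticalOrbit b n)
  | 0 => .zero A
  | n + 1 => by
    have hn := isSelfAdjoint_criticalOrbit hb n
    exact .add (hn.commute_iff hn |>.1 rfl) hb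

lemma criticalOrbit_nonneg {r : ℝ} (hr : 0 ≤ r) : ∀ n, 0 ≤ criticalOrbit r n
  | 0 => le_rfl
  | n + 1 => add_nonneg (mul_self_nonneg (criticalOrbit r n)) hr

lemma criticalOrbit_le_half {r : ℝ} (hr : 0 ≤ r) (hr' : r ≤ 1 / 4) (n : ℕ) :
    criticalOrbit r n ≤ 1 / 2 := by
  induction n with
  | zero => norm_num [criticalOrbit]
  | succ n ih =>
    have hn := criticalOrbit_nonneg hr n
    calc criticalOrbit r n * criticalOrbit r n + r
      _ ≤ 1 / 2 * (1 / 2) + 1 / 4 := by gcongr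
      _ = 1 / 2 := by norm_num

variable {A : Type*} [NonUnitalNormedRing A]

lemma norm_criticalOrbit_le (b : A) (n : ℕ) : ‖criticalOrbit b n‖ ≤ criticalOrbit ‖b‖ n := by
  induction n with
  | zero => exact norm_zero.le
  | succ n ih =>
    have hn := criticalOrbit_nonneg (norm_nonneg b) n
    calc ‖criticalOrbit b n * criticalOrbit b n + b‖
      _ ≤ ‖criticalOrbit b n‖ * ‖criticalOrbit b n‖ + ‖b‖ := by
        grw [norm_add_le, norm_mul_le]
      _ ≤ criticalOrbit ‖b‖ n * criticalOrbit ‖b‖ n + ‖b‖ := by gcongr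

lemma norm_criticalOrbit_succ_sub_le (b : A) (n : ℕ) :
    ‖criticalOrbit b (n + 1) - criticalOrbit b n‖ ≤
      criticalOrbit ‖b‖ (n + 1) - criticalOrbit ‖b‖ n := by
  induction n with
  | zero => simp [criticalOrbit]
  | succ n ih =>
    have hn := criticalOrbit_nonneg (norm_nonneg b) (n + 1)
    have increment_nonneg := (norm_nonneg _).trans ih
    rw [criticalOrbit_succ_succ_sub b, criticalOrbit_succ_succ_sub ‖b‖]
    grw [norm_add_le, norm_mul_le, norm_mul_le]
    gcongr <;> exact norm_criticalOrbit_le b _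

lemma cauchySeq_criticalOrbit {b : A} (hb : ‖b‖ ≤ 1 / 4) : CauchySeq (criticalOrbit b) := by
  have summable_increments :
      Summable fun n => criticalOrbit ‖b‖ (n + 1) - criticalOrbit ‖b‖ n := by
    refine summable_of_sum_range_le (c := 1 / 2)
      (fun n => (norm_nonneg _).trans (norm_criticalOrbit_succ_sub_le b n)) fun n => ?_
    rw [Finset.sum_range_sub, criticalOrbit, sub_zero]
    exact criticalOrbit_le_half (norm_nonneg b) hb n
  refine cauchySeq_of_dist_le_of_summable _ (fun n => ?_) summable_increments
  rw [dist_eq_norm_sub']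
  exact norm_criticalOrbit_succ_sub_le b n

lemma exists_isSelfAdjoint_mul_self_add_eq [CompleteSpace A] [StarRing A] [ContinuousStar A]
    {b : A} (hb : IsSelfAdjoint b) (hnorm : ‖b‖ ≤ 1 / 4) :
    ∃ z : A, IsSelfAdjoint z ∧ ‖z‖ ≤ 1 / 2 ∧ z * z + b = z := by
  obtain ⟨z, hz⟩ := cauchySeq_tendsto_of_complete (cauchySeq_criticalOrbit hnorm)
  refine ⟨z, ?_, ?_, ?_⟩
  · exact (isClosed_eq continuous_star continuous_id).mem_of_tendsto hz
      (.of_forall (isSelfAdjoint_criticalOrbit hb))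
  · exact le_of_tendsto hz.norm <| .of_forall fun n =>
      (norm_criticalOrbit_le b n).trans (criticalOrbit_le_half (norm_nonneg b) hnorm n)
  · exact tendsto_nhds_unique ((hz.mul hz).add_const b) (hz.comp (Filter.tendsto_add_atTop_nat 1))

end CriticalOrbit

section SquareRoot

variable {𝕜 E : Type*} [RCLike 𝕜] [NormedAddCommGroup E] [InnerProductSpace 𝕜 E]

lemma isPositive_one_sub_of_norm_le_one {T : E →L[𝕜] E} (hT : T.IsSymmetric) (hnorm : ‖T‖ ≤ 1) :
    (1 - T).IsPositive := by
  refine ⟨LinearMap.IsSymmetric.id.sub hT, fun x => ?_⟩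
  have re_inner_le : re ⟪T x, x⟫_𝕜 ≤ ‖x‖ ^ 2 := by
    grw [re_inner_le_norm, T.le_of_opNorm_le hnorm x, one_mul, sq]
  simpa [reApplyInnerSelf_apply, inner_sub_left] using re_inner_le

lemma norm_le_one_of_isPositive_of_isPositive_one_sub {T : E →L[𝕜] E} (hT : T.IsPositive)
    (hT' : (1 - T).IsPositive) : ‖T‖ ≤ 1 := by
  rw [T.norm_eq_iSup_rayleighQuotient hT.isSymmetric]
  refine ciSup_le fun x => ?_
  have re_inner_le : re ⟪T x, x⟫_𝕜 ≤ ‖x‖ ^ 2 := by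
    simpa [inner_sub_left] using hT'.re_inner_nonneg_left x
  rw [abs_of_nonneg (div_nonneg (hT.2 x) (sq_nonneg _))]
  exact div_le_one_of_le₀ re_inner_le (sq_nonneg _)

variable [CompleteSpace E]

lemma exists_isPositive_mul_self_eq_of_norm_le_one {P : E →L[𝕜] E} (hP : P.IsPositive)
    (hnorm : ‖P‖ ≤ 1) : ∃ R : E →L[𝕜] E, R.IsPositive ∧ R * R = P := by
  have hQ : (1 - P).IsPositive := isPositive_one_sub_of_norm_le_one hP.isSymmetric hnorm
  have hQnorm : ‖1 - P‖ ≤ 1 :=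
    norm_le_one_of_isPositive_of_isPositive_one_sub hQ (by rwa [sub_sub_cancel])
  set b : E →L[𝕜] E := ((4⁻¹ : ℝ) : 𝕜) • (1 - P) with hb
  have hbnorm : ‖b‖ ≤ 1 / 4 := by
    rw [hb, norm_smul, RCLike.norm_ofReal, abs_of_pos (by norm_num)]
    linarith
  obtain ⟨z, hz, hznorm, hfix⟩ := exists_isSelfAdjoint_mul_self_add_eq
    (hQ.smul_of_nonneg (RCLike.ofReal_nonneg.2 (by norm_num))).isSelfAdjoint hbnorm
  refine ⟨1 - (z + z), isPositive_one_sub_of_norm_le_one (hz.add hz).isSymmetric ?_, ?_⟩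
  · grw [norm_add_le, hznorm]
    norm_num
  · calc (1 - (z + z)) * (1 - (z + z))
      _ = 1 - 4 • (z - z * z) := by noncomm_ring
      _ = 1 - 4 • b := by rw [sub_eq_iff_eq_add'.2 hfix.symm]
      _ = P := by
        rw [hb, RCLike.ofReal_inv, RCLike.ofReal_ofNat]
        module

theorem exists_isPositive_mul_self_eq {P : E →L[𝕜] E} (hP : P.IsPositive) :
    ∃ R : E →L[𝕜] E, R.IsPositive ∧ R * R = P := by
  rcases eq_or_ne P 0 with rfl | hP0
  · exact ⟨0, isPositive_zero, mul_zero 0⟩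
  have scaled_norm : ‖((‖P‖⁻¹ : ℝ) : 𝕜) • P‖ ≤ 1 := by
    rw [RCLike.ofReal_inv, norm_smul_inv_norm hP0]
  obtain ⟨S, hS, hSS⟩ := exists_isPositive_mul_self_eq_of_norm_le_one
    (hP.smul_of_nonneg (RCLike.ofReal_nonneg.2 (by positivity))) scaled_norm
  refine ⟨(√‖P‖ : 𝕜) • S, hS.smul_of_nonneg (RCLike.ofReal_nonneg.2 (by positivity)), ?_⟩
  rw [smul_mul_smul_comm, hSS, ← RCLike.ofReal_mul, Real.mul_self_sqrt (norm_nonneg P),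
    RCLike.ofReal_inv, smul_inv_smul₀ (by simpa using hP0)]

end SquareRoot

section Quadratic

variable {𝕜 E F : Type*} [RCLike 𝕜]
  [NormedAddCommGroup E] [InnerProductSpace 𝕜 E] [NormedAddCommGroup F] [InnerProductSpace 𝕜 F]

-- Rotate `x` so that `⟪w, x⟫` becomes `‖⟪w, x⟫‖`; a polynomial in a real scalar `t` remains.
lemma sq_norm_inner_le_of_le_quadratic {P : E →L[𝕜] E} {w : E} {c : ℝ}
    (h : ∀ x, c ≤ re ⟪P x, x⟫_𝕜 + 2 * re ⟪w, x⟫_𝕜) (x : E) :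
    ‖⟪w, x⟫_𝕜‖ ^ 2 ≤ -c * re ⟪P x, x⟫_𝕜 := by
  obtain ⟨u, hu, hrot⟩ := RCLike.exists_norm_eq_mul_self ⟪w, x⟫_𝕜
  have polynomial_nonneg (t : ℝ) :
      0 ≤ re ⟪P x, x⟫_𝕜 * (t * t) + 2 * ‖⟪w, x⟫_𝕜‖ * t + -c := by
    have linear_term : re ⟪w, ((t : 𝕜) * u) • x⟫_𝕜 = t * ‖⟪w, x⟫_𝕜‖ := by
      rw [inner_smul_right, mul_assoc, ← hrot, ← RCLike.ofReal_mul, RCLike.ofReal_re]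
    have quadratic_term :
        re ⟪P (((t : 𝕜) * u) • x), ((t : 𝕜) * u) • x⟫_𝕜 = t * t * re ⟪P x, x⟫_𝕜 := by
      simpa [reApplyInnerSelf_apply, hu, sq] using P.reApplyInnerSelf_smul x (c := (t : 𝕜) * u)
    linarith [h (((t : 𝕜) * u) • x)]
  have := discrim_le_zero polynomial_nonneg
  rw [discrim] at this
  linarith

lemma re_inner_nonneg_of_le_quadratic {P : E →L[𝕜] E} {w : E} {c : ℝ}
    (h : ∀ x, c ≤ re ⟪P x, x⟫_𝕜 + 2 * re ⟪w, x⟫_𝕜) (x : E) : 0 ≤ re ⟪P x, x⟫_𝕜 := by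
  have negative_bound : min c (-1) < 0 := (min_le_right _ _).trans_lt (by norm_num)
  have := sq_norm_inner_le_of_le_quadratic (fun x => (min_le_left c (-1)).trans (h x)) x
  exact nonneg_of_mul_nonneg_right ((sq_nonneg _).trans this) (neg_pos.2 negative_bound)

variable [CompleteSpace E] [CompleteSpace F]

lemma mem_range_adjoint_of_norm_inner_le {T : E →L[𝕜] F} {w : E} {K : ℝ}
    (h : ∀ x, ‖⟪w, x⟫_𝕜‖ ≤ K * ‖T x‖) : w ∈ Set.range (adjoint T) := by
  have bounded : ∃ C : ℝ, ∀ x, ‖(innerSL 𝕜 w).toLinearMap x‖ ≤ C * ‖T.toLinearMap x‖ := ⟨K, h⟩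
  obtain ⟨g, hg, -⟩ := exists_extension_norm_eq _
    ((innerSL 𝕜 w).toLinearMap.compLeftInverse T.toLinearMap)
  refine ⟨(InnerProductSpace.toDual 𝕜 F).symm g, ext_inner_right 𝕜 fun x => ?_⟩
  calc ⟪adjoint T ((InnerProductSpace.toDual 𝕜 F).symm g), x⟫_𝕜
    _ = g (T x) := by rw [adjoint_inner_left, InnerProductSpace.toDual_symm_apply]
    _ = ⟪w, x⟫_𝕜 :=
      (hg ⟨T x, x, rfl⟩).trans (LinearMap.compLeftInverse_apply_of_bdd _ _ bounded x _ rfl)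

theorem exists_forall_le_sq_norm_add_iff_mem_range_adjoint (T : E →L[𝕜] F) (w : E) :
    (∃ c : ℝ, ∀ x, c ≤ ‖T x‖ ^ 2 + 2 * re ⟪w, x⟫_𝕜) ↔ w ∈ Set.range (adjoint T) := by
  constructor
  · rintro ⟨c, hc⟩
    have sq_norm_le (x : E) : ‖⟪w, x⟫_𝕜‖ ^ 2 ≤ -c * ‖T x‖ ^ 2 := by
      simp only [apply_norm_sq_eq_inner_adjoint_left] at hc ⊢
      exact sq_norm_inner_le_of_le_quadratic hc x
    refine mem_range_adjoint_of_norm_inner_le (K := √(-c)) fun x => ?_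
    calc ‖⟪w, x⟫_𝕜‖
      _ ≤ √(-c * ‖T x‖ ^ 2) := Real.le_sqrt_of_sq_le (sq_norm_le x)
      _ = √(-c) * ‖T x‖ := by rw [Real.sqrt_mul' _ (sq_nonneg _), Real.sqrt_sq (norm_nonneg _)]
  · rintro ⟨v, rfl⟩
    refine ⟨-‖v‖ ^ 2, fun x => ?_⟩
    rw [adjoint_inner_left]
    linarith [norm_add_sq (𝕜 := 𝕜) v (T x), sq_nonneg ‖v + T x‖]

end Quadratic

/-- **Lemma 4.1, first part**: the quadratic function
`V_{P,w}(x) = ⟨Px,x⟩ + 2Re⟨w,x⟩` is bounded from below if and only if `P` is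
non-negative and `w ∈ ran P^{1/2}`. -/
theorem quadratic_bddBelow_iff
    {𝕜 H : Type*} [RCLike 𝕜]
    [NormedAddCommGroup H] [InnerProductSpace 𝕜 H] [CompleteSpace H]
    (P : H →L[𝕜] H) (hP : IsSelfAdjoint P) (w : H) :
    (∃ cb : ℝ, ∀ x : H, cb ≤ re ⟪P x, x⟫_𝕜 + 2 * re ⟪w, x⟫_𝕜)
    ↔
    ((∀ x : H, 0 ≤ re ⟪P x, x⟫_𝕜) ∧ MemRanSqrt P w) := by
  have re_inner_eq {R : H →L[𝕜] H} (hR : IsSelfAdjoint R) (hRR : R.comp R = P) (x : H) :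
      re ⟪P x, x⟫_𝕜 = ‖R x‖ ^ 2 := by
    rw [apply_norm_sq_eq_inner_adjoint_left, hR.adjoint_eq, hRR]
  constructor
  · rintro ⟨c, hc⟩
    have nonneg := re_inner_nonneg_of_le_quadratic hc
    obtain ⟨R, hR, hRR⟩ := exists_isPositive_mul_self_eq (isPositive_def'.2 ⟨hP, nonneg⟩)
    refine ⟨nonneg, R, hR.isSelfAdjoint, hR.re_inner_nonneg_left, hRR, ?_⟩
    simp only [re_inner_eq hR.isSelfAdjoint hRR] at hc
    simpa only [hR.isSelfAdjoint.adjoint_eq] using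
      (exists_forall_le_sq_norm_add_iff_mem_range_adjoint R w).1 ⟨c, hc⟩
  · rintro ⟨-, R, hR, -, hRR, hw⟩
    simp only [re_inner_eq hR hRR]
    exact (exists_forall_le_sq_norm_add_iff_mem_range_adjoint R w).2 (by rwa [hR.adjoint_eq])
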